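/- arXiv:math/0010306 — 2 statements merged into one kernel-verified Lean document; each statement's English description precedes it below -/
import Mathlib

section
/- Let L be a first-order language and T a model complete L-theory. If T has a model whose complete theory has the strict order property, then the theory T_σ has no model companion. -/
universe u v w

open FirstOrder Language Structure

/-- The language with a single unary function symbol `σ` and no other symbols. -/
def unaryFunctionLanguage : FirstOrder.Language.{0, 0} where
  Functions := fun n => match n with
    | 1 => Unit
    | _ => Empty
  Relations := fun _ => Empty

/-- `L_σ`: the language `L` expanded by one new unary function symbol `σ`. -/
abbrev Lsigma (L : FirstOrder.Language.{u, v}) : FirstOrder.Language :=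
  L.sum unaryFunctionLanguage

/-- The interpretation of the new unary function symbol `σ` in an `L_σ`-structure. -/
def sigmaMap (L : FirstOrder.Language.{u, v}) (M : Type w) [(Lsigma L).Structure M] :
    M → M :=
  fun x => funMap (L := Lsigma L) (M := M)
    ((Sum.inr () : L.Functions 1 ⊕ unaryFunctionLanguage.Functions 1)) ![x]

/-- `M` is a model of `T_σ = T ∪ {"σ is an L-automorphism"}`: the `L`-reduct of `M`
models `T` and the interpretation of `σ` is an `L`-automorphism of the reduct
(a bijection preserving every atomic `L`-formula in both directions). -/
def IsModelOfTsigma (L : FirstOrder.Language.{u, v}) (T : L.Theory) (M : Type w)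
    [(Lsigma L).Structure M] : Prop :=
  letI : L.Structure M := (LHom.sumInl (L := L) (L' := unaryFunctionLanguage)).reduct M
  M ⊨ T ∧ ∃ e : M ≃[L] M, ⇑e = sigmaMap L M

/-- An embedding between structures is elementary if it preserves the realization of all
first-order formulas. -/
def Embedding.IsElem {L' : FirstOrder.Language.{u2, v2}} {M N : Type*} [L'.Structure M]
    [L'.Structure N] (f : M ↪[L'] N) : Prop :=
  ∀ {n : ℕ} (φ : L'.Formula (Fin n)) (x : Fin n → M), φ.Realize (⇑f ∘ x) ↔ φ.Realize x

/-- A theory is model complete if every embedding between its models is elementary. -/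
def TheoryIsModelComplete (L' : FirstOrder.Language.{u2, v2}) (T' : L'.Theory) : Prop :=
  ∀ (M N : Type (max u2 v2)) [L'.Structure M] [L'.Structure N],
    M ⊨ T' → N ⊨ T' → ∀ f : M ↪[L'] N, Embedding.IsElem f


noncomputable def EE (m : ℤ) : ℕ → Ultrafilter (ℤ → ℕ)
  | 0 => pure 0
  | n + 1 => Ultrafilter.bind (EE m n)
      (fun s => (Filter.hyperfilter ℕ).map (fun j => Function.update s (m + n) j))

lemma mem_EE_zero (m : ℤ) (S : Set (ℤ → ℕ)) : S ∈ EE m 0 ↔ (0 : ℤ → ℕ) ∈ S := Iff.rfl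

lemma mem_EE_succ (m : ℤ) (n : ℕ) (S : Set (ℤ → ℕ)) :
    S ∈ EE m (n + 1) ↔
      {s | {j | Function.update s (m + n) j ∈ S} ∈ Filter.hyperfilter ℕ} ∈ EE m n := Iff.rfl

lemma EE_const (p : Prop) : {_j : ℕ | p} ∈ Filter.hyperfilter ℕ ↔ p := by
  by_cases h : p
  · simp only [h, iff_true]
    exact Filter.univ_mem
  · simp only [h, iff_false]
    exact Filter.notMem_hyperfilter_of_finite (by simp)

lemma EE_right (m : ℤ) (n : ℕ) (S : Set (ℤ → ℕ))
    (hS : ∀ s j, Function.update s (m + n) j ∈ S ↔ s ∈ S) :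
    S ∈ EE m (n + 1) ↔ S ∈ EE m n := by
  rw [mem_EE_succ]
  simp only [hS, EE_const]
  rfl

lemma EE_left (m : ℤ) (n : ℕ) : ∀ (S : Set (ℤ → ℕ)),
    (∀ s j, Function.update s m j ∈ S ↔ s ∈ S) →
    (S ∈ EE m (n + 1) ↔ S ∈ EE (m + 1) n) := by
  induction n with
  | zero =>
    intro S hS
    rw [EE_right]
    · rfl
    · simpa using hS
  | succ n ih =>
    intro S hS
    rw [mem_EE_succ, ih, mem_EE_succ]
    · have : m + 1 + (n : ℤ) = m + ((n + 1 : ℕ) : ℤ) := by push_cast; ring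
      rw [this]
    · intro s j
      have hne : m + ((n + 1 : ℕ) : ℤ) ≠ m := by push_cast; omega
      simp only [Set.mem_ofPred_eq]
      simp only [fun i => Function.update_comm hne.symm j i s, hS]

/-- the set `S` only depends on coordinates in `[-N, N)` -/
def Cyl {β : Type*} (N : ℕ) (f : (ℤ → ℕ) → β) : Prop :=
  ∀ s t : ℤ → ℕ, (∀ z : ℤ, -(N : ℤ) ≤ z → z < N → s z = t z) → f s = f t

lemma Cyl.mono {β : Type*} {N N' : ℕ} {f : (ℤ → ℕ) → β} (h : Cyl N f) (hN : N ≤ N') :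
    Cyl N' f := fun s t hst => h s t (fun z h1 h2 => hst z (by omega) (by omega))

lemma EE_cyl (N : ℕ) (S : (ℤ → ℕ) → Prop) (hS : Cyl N S) (l r : ℕ) :
    {s | S s} ∈ EE (-(N : ℤ) - l) (l + 2 * N + r) ↔ {s | S s} ∈ EE (-(N : ℤ)) (2 * N) := by
  have hup : ∀ (z : ℤ), (z < -(N : ℤ) ∨ (N : ℤ) ≤ z) → ∀ s j,
      Function.update s z j ∈ {s | S s} ↔ s ∈ {s | S s} := by
    intro z hz s j
    simp only [Set.mem_ofPred_eq]
    refine iff_of_eq (hS _ _ ?_)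
    intro y h1 h2
    exact Function.update_of_ne (by omega) _ _
  induction r with
  | succ r ih =>
    refine Iff.trans ?_ ih
    rw [← add_assoc]
    apply EE_right
    apply hup
    push_cast
    omega
  | zero =>
    induction l with
    | zero => simp
    | succ l ih =>
      refine Iff.trans ?_ ih
      have e1 : l + 1 + 2 * N + 0 = (l + 2 * N + 0) + 1 := by ring
      have e2 : -(N : ℤ) - l = (-(N : ℤ) - (l + 1 : ℕ)) + 1 := by push_cast; ring
      rw [e1, e2]
      apply EE_left
      apply hup
      push_cast
      omega

/-- the shift -/
def shiftE : (ℤ → ℕ) ≃ (ℤ → ℕ) where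
  toFun s z := s (z - 1)
  invFun s z := s (z + 1)
  left_inv s := by ext z; simp
  right_inv s := by ext z; simp

lemma EE_shift (m : ℤ) (n : ℕ) : ∀ S : Set (ℤ → ℕ),
    {s | shiftE s ∈ S} ∈ EE m n ↔ S ∈ EE (m + 1) n := by
  induction n with
  | zero => intro S; exact Iff.rfl
  | succ n ih =>
    intro S
    rw [mem_EE_succ, mem_EE_succ, ← ih]
    have : ∀ s j, shiftE (Function.update s (m + n) j) =
        Function.update (shiftE s) (m + 1 + n) j := by
      intro s j
      ext z
      simp only [shiftE, Equiv.coe_fn_mk, Function.update_apply]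
      congr 1
      apply propext
      omega
    simp only [Set.mem_ofPred_eq, this]

noncomputable def EU : Ultrafilter (ℤ → ℕ) :=
  Ultrafilter.bind (Filter.hyperfilter ℕ) (fun N => EE (-(N : ℤ)) (2 * N))

lemma EU_cyl (N : ℕ) (S : (ℤ → ℕ) → Prop) (hS : Cyl N S) :
    (∀ᶠ s in (EU : Filter (ℤ → ℕ)), S s) ↔ {s | S s} ∈ EE (-(N : ℤ)) (2 * N) := by
  have h1 : (∀ᶠ s in (EU : Filter (ℤ → ℕ)), S s) ↔
      {n : ℕ | {s | S s} ∈ EE (-(n : ℤ)) (2 * n)} ∈ Filter.hyperfilter ℕ := Iff.rfl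
  have h2 : ∀ᶠ n : ℕ in (Filter.hyperfilter ℕ : Filter ℕ),
      ({s | S s} ∈ EE (-(n : ℤ)) (2 * n) ↔ {s | S s} ∈ EE (-(N : ℤ)) (2 * N)) := by
    apply Nat.hyperfilter_le_atTop
    filter_upwards [Filter.eventually_ge_atTop N] with n hn
    obtain ⟨d, rfl⟩ := Nat.exists_eq_add_of_le hn
    rw [← EE_cyl N S hS d d]
    have e1 : -((N + d : ℕ) : ℤ) = -(N : ℤ) - d := by push_cast; ring
    have e2 : 2 * (N + d) = d + 2 * N + d := by ring
    rw [e1, e2]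
  rw [h1]
  have h3 := Filter.eventually_congr h2
  rw [← EE_const ({s | S s} ∈ EE (-(N : ℤ)) (2 * N))]
  exact h3

lemma Cyl.shift {β : Type*} {N : ℕ} {f : (ℤ → ℕ) → β} (h : Cyl N f) :
    Cyl (N + 1) (fun s => f (shiftE s)) := by
  intro s t hst
  apply h
  intro z h1 h2
  apply hst <;> push_cast <;> omega

lemma Cyl.shift_symm {β : Type*} {N : ℕ} {f : (ℤ → ℕ) → β} (h : Cyl N f) :
    Cyl (N + 1) (fun s => f (shiftE.symm s)) := by
  intro s t hst
  apply h
  intro z h1 h2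
  apply hst <;> push_cast <;> omega

lemma EU_shift (N : ℕ) (S : (ℤ → ℕ) → Prop) (hS : Cyl N S) :
    (∀ᶠ s in (EU : Filter (ℤ → ℕ)), S (shiftE s)) ↔ ∀ᶠ s in (EU : Filter (ℤ → ℕ)), S s := by
  rw [EU_cyl (N + 1) _ hS.shift, EU_cyl N S hS, ← EE_cyl N S hS 0 2]
  have := EE_shift (-((N + 1 : ℕ) : ℤ)) (2 * (N + 1)) {s | S s}
  refine this.trans ?_
  have e1 : -((N + 1 : ℕ) : ℤ) + 1 = -(N : ℤ) - (0 : ℕ) := by push_cast; ring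
  have e2 : 2 * (N + 1) = 0 + 2 * N + 2 := by ring
  rw [e1, e2]

lemma EU_shift_symm (N : ℕ) (S : (ℤ → ℕ) → Prop) (hS : Cyl N S) :
    (∀ᶠ s in (EU : Filter (ℤ → ℕ)), S (shiftE.symm s)) ↔
      ∀ᶠ s in (EU : Filter (ℤ → ℕ)), S s := by
  rw [← EU_shift (N + 1) _ hS.shift_symm]
  simp

lemma EU_two (R : ℕ → ℕ → Prop) :
    (∀ᶠ s in (EU : Filter (ℤ → ℕ)), R (s (-1)) (s 0)) ↔
      ∀ᶠ i in (Filter.hyperfilter ℕ : Filter ℕ), ∀ᶠ j in (Filter.hyperfilter ℕ : Filter ℕ),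
        R i j := by
  rw [EU_cyl 1]
  · change _ ∈ EE (-((1 : ℕ) : ℤ)) (0 + 1 + 1) ↔ _
    rw [mem_EE_succ, mem_EE_succ, mem_EE_zero]
    simp
    rfl
  · intro s t hst
    simp only
    rw [hst (-1) (by simp) (by simp), hst 0 (by simp) (by simp)]

section LemmaA

variable {L : FirstOrder.Language.{u, v}} {K : Type w} [L.Structure K]

abbrev UP (K : Type w) : Type w := (EU : Filter (ℤ → ℕ)).Product (fun _ => K)

noncomputable abbrev toUP (f : (ℤ → ℕ) → K) : UP K :=
  Quotient.mk' (s := (EU : Filter (ℤ → ℕ)).productSetoid (fun _ => K)) f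

lemma toUP_eq (f g : (ℤ → ℕ) → K) :
    toUP f = toUP g ↔ ∀ᶠ s in (EU : Filter (ℤ → ℕ)), f s = g s := Quotient.eq''

lemma cyl_common {n : ℕ} {β : Type*} (f : Fin n → (ℤ → ℕ) → β) (h : ∀ i, ∃ N, Cyl N (f i)) :
    ∃ N, ∀ i, Cyl N (f i) := by
  choose N hN using h
  exact ⟨Finset.univ.sup N, fun i => (hN i).mono (Finset.le_sup (Finset.mem_univ i))⟩

/-- the substructure of the ultrapower given by finitely supported functions -/
def KS (L : FirstOrder.Language.{u, v}) (K : Type w) [L.Structure K] :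
    L.Substructure (UP K) where
  carrier := {x | ∃ f : (ℤ → ℕ) → K, (∃ N, Cyl N f) ∧ toUP f = x}
  fun_mem := by
    intro n F xs hxs
    choose f hf hfx using hxs
    obtain ⟨N, hN⟩ := cyl_common f hf
    refine ⟨fun s => funMap F (fun i => f i s), ⟨N, ?_⟩, ?_⟩
    · intro s t hst
      simp only
      congr 1
      funext i
      exact hN i s t hst
    · have : xs = fun i => toUP (f i) := funext fun i => (hfx i).symm
      rw [this]
      exact (Ultraproduct.funMap_cast (u := EU) (M := fun _ => K) F f).symm

noncomputable def KSmk (f : (ℤ → ℕ) → K) (hf : ∃ N, Cyl N f) : KS L K := ⟨toUP f, f, hf, rfl⟩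

lemma KS_exists (x : KS L K) : ∃ f hf, x = KSmk (L := L) f hf := by
  obtain ⟨x, f, hf, rfl⟩ := x
  exact ⟨f, hf, rfl⟩

lemma KS_elem [Nonempty K] : (KS L K).IsElementary := by
  apply Substructure.isElementary_of_exists
  intro n φ x a h
  choose f hf hfx using fun i => (KS_exists (x i))
  obtain ⟨N, hN⟩ := cyl_common f hf
  obtain ⟨g, rfl⟩ := Quotient.exists_rep a
  classical
  let P : (ℤ → ℕ) → K → Prop := fun s y => φ.Realize default (Fin.snoc (fun i => f i s) y)
  let b : (ℤ → ℕ) → K := fun s => Classical.epsilon (P s)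
  have hP : Cyl N P := by
    intro s t hst
    have : (fun i => f i s) = fun i => f i t := funext fun i => hN i s t hst
    simp only [P, this]
  have hb : Cyl N b := by
    intro s t hst
    simp only [b, hP s t hst]
  have key : ∀ g : (ℤ → ℕ) → K, φ.Realize default (Fin.snoc ((↑) ∘ x) (toUP g) : _ → UP K) ↔
      ∀ᶠ s in (EU : Filter (ℤ → ℕ)), P s (g s) := by
    intro g
    have h1 := Ultraproduct.boundedFormula_realize_cast (u := EU) (M := fun _ => K) φ
      (fun e => e.elim) (Fin.snoc f g : Fin (n + 1) → (ℤ → ℕ) → K)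
    have h2 : (Fin.snoc ((↑) ∘ x) (toUP g) : _ → UP K) =
        fun i => toUP ((Fin.snoc f g : Fin (n + 1) → (ℤ → ℕ) → K) i) := by
      funext i
      refine Fin.lastCases ?_ (fun i => ?_) i
      · simp
      · simp [hfx, KSmk]
    have h3 : ∀ s, (fun i => (Fin.snoc f g : Fin (n + 1) → (ℤ → ℕ) → K) i s) =
        Fin.snoc (fun i => f i s) (g s) := by
      intro s
      funext i
      refine Fin.lastCases ?_ (fun i => ?_) i
      · simp
      · simp
    rw [h2]
    refine Iff.trans (iff_of_eq ?_) (h1.trans ?_)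
    · congr 1
      exact Subsingleton.elim _ _
    · simp only [h3, P]
      apply Filter.eventually_congr
      apply Filter.Eventually.of_forall
      intro s
      rw [Subsingleton.elim (fun i : Empty => _) default]
  refine ⟨KSmk b ⟨N, hb⟩, ?_⟩
  refine (key b).2 ?_
  filter_upwards [(key g).1 h] with s hs
  exact Classical.epsilon_spec (p := P s) ⟨_, hs⟩

lemma KS_realize [Nonempty K] {α : Type*} (φ : L.Formula α) (f : α → (ℤ → ℕ) → K) (hf : ∀ i, ∃ N, Cyl N (f i)) :
    φ.Realize (fun i => KSmk (L := L) (f i) (hf i)) ↔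
      ∀ᶠ s in (EU : Filter (ℤ → ℕ)), φ.Realize (fun i => f i s) := by
  let S : L.ElementarySubstructure (UP K) := ⟨KS L K, KS_elem⟩
  have h1 := S.subtype.map_formula φ (fun i => KSmk (L := L) (f i) (hf i))
  refine h1.symm.trans ?_
  exact Ultraproduct.realize_formula_cast (u := EU) (M := fun _ => K) φ f

/-- the action of an automorphism of `K` composed with a shift -/
noncomputable def KSmap (h : K → K) (e : (ℤ → ℕ) → (ℤ → ℕ))
    (he : ∀ f : (ℤ → ℕ) → K, (∃ N, Cyl N f) → ∃ N, Cyl N (fun s => h (f (e s))))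
    (x : KS L K) : KS L K :=
  KSmk (fun s => h (Classical.choose (KS_exists x) (e s)))
    (he _ (Classical.choose (Classical.choose_spec (KS_exists x))))

lemma KSmk_eq (f g : (ℤ → ℕ) → K) (hf hg) :
    KSmk (L := L) f hf = KSmk g hg ↔ ∀ᶠ s in (EU : Filter (ℤ → ℕ)), f s = g s := by
  rw [← toUP_eq]
  exact Subtype.ext_iff

lemma KSmap_mk (h : K → K) (e : (ℤ → ℕ) → (ℤ → ℕ))
    (he : ∀ f : (ℤ → ℕ) → K, (∃ N, Cyl N f) → ∃ N, Cyl N (fun s => h (f (e s))))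
    (hE : ∀ (N : ℕ) (S : (ℤ → ℕ) → Prop), Cyl N S →
      ((∀ᶠ s in (EU : Filter (ℤ → ℕ)), S (e s)) ↔ ∀ᶠ s in (EU : Filter (ℤ → ℕ)), S s))
    (f : (ℤ → ℕ) → K) (hf : ∃ N, Cyl N f) :
    KSmap (L := L) h e he (KSmk f hf) = KSmk (fun s => h (f (e s))) (he f hf) := by
  unfold KSmap
  obtain ⟨hg, hfg⟩ := Classical.choose_spec (KS_exists (KSmk (L := L) f hf))
  rw [KSmk_eq] at hfg ⊢
  obtain ⟨N1, h1⟩ := hf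
  obtain ⟨N2, h2⟩ := hg
  have h1' := h1.mono (le_max_left N1 N2)
  have h2' := h2.mono (le_max_right N1 N2)
  have := (hE (max N1 N2) (fun s => f s = Classical.choose (KS_exists (KSmk (L := L) f ⟨N1, h1⟩)) s)
    (by intro s t hst; simp only [h1' s t hst, h2' s t hst])).2 hfg
  filter_upwards [this] with s hs
  rw [hs]

lemma he_shift {K : Type w} (h : K → K) (f : (ℤ → ℕ) → K) (hf : ∃ N, Cyl N f) :
    ∃ N, Cyl N (fun s => h (f (shiftE s))) := by
  obtain ⟨N, hN⟩ := hf
  exact ⟨N + 1, fun s t hst => congrArg h (hN.shift s t hst)⟩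

lemma he_shift_symm {K : Type w} (h : K → K) (f : (ℤ → ℕ) → K) (hf : ∃ N, Cyl N f) :
    ∃ N, Cyl N (fun s => h (f (shiftE.symm s))) := by
  obtain ⟨N, hN⟩ := hf
  exact ⟨N + 1, fun s t hst => congrArg h (hN.shift_symm s t hst)⟩

lemma KS_exists_tuple {n : ℕ} (x : Fin n → KS L K) :
    ∃ (f : Fin n → (ℤ → ℕ) → K) (hf : ∀ i, ∃ N, Cyl N (f i)),
      x = fun i => KSmk (L := L) (f i) (hf i) := by
  choose f hf h using fun i => KS_exists (x i)
  exact ⟨f, hf, funext h⟩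

noncomputable def KSaut (σ : K ≃[L] K) : KS L K ≃[L] KS L K where
  toFun := KSmap σ shiftE (he_shift σ)
  invFun := KSmap σ.symm shiftE.symm (he_shift_symm σ.symm)
  left_inv x := by
    obtain ⟨f, hf, rfl⟩ := KS_exists x
    rw [KSmap_mk _ _ _ EU_shift, KSmap_mk _ _ _ EU_shift_symm, KSmk_eq]
    simp
  right_inv x := by
    obtain ⟨f, hf, rfl⟩ := KS_exists x
    rw [KSmap_mk _ _ _ EU_shift_symm, KSmap_mk _ _ _ EU_shift, KSmk_eq]
    simp
  map_fun' := by
    intro n F x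
    obtain ⟨f, hf, rfl⟩ := KS_exists_tuple x
    have key : ∀ (f : Fin n → (ℤ → ℕ) → K) (hf : ∀ i, ∃ N, Cyl N (f i)),
        ∃ h, funMap F (fun i => KSmk (L := L) (f i) (hf i)) =
          KSmk (fun s => funMap F (fun i => f i s)) h := by
      intro f hf
      refine ⟨?_, ?_⟩
      · obtain ⟨N, hN⟩ := cyl_common f hf
        exact ⟨N, fun s t hst => congrArg _ (funext fun i => hN i s t hst)⟩
      · apply Subtype.ext
        exact Ultraproduct.funMap_cast (u := EU) (M := fun _ => K) F f
    obtain ⟨h1, e1⟩ := key f hf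
    simp only [Function.comp_def]
    rw [e1]
    simp only [KSmap_mk _ _ _ EU_shift]
    obtain ⟨h2, e2⟩ := key (fun i s => σ (f i (shiftE s))) (fun i => he_shift σ (f i) (hf i))
    rw [e2, KSmk_eq]
    apply Filter.Eventually.of_forall
    intro s
    exact σ.map_fun F _
  map_rel' := by
    intro n R x
    obtain ⟨f, hf, rfl⟩ := KS_exists_tuple x
    have key : ∀ (f : Fin n → (ℤ → ℕ) → K) (hf : ∀ i, ∃ N, Cyl N (f i)),
        RelMap R (fun i => KSmk (L := L) (f i) (hf i)) ↔
          ∀ᶠ s in (EU : Filter (ℤ → ℕ)), RelMap R (fun i => f i s) := by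
      intro f hf
      exact relMap_quotient_mk' ((EU : Filter (ℤ → ℕ)).productSetoid (fun _ => K)) R f
    simp only [Function.comp_def, KSmap_mk _ _ _ EU_shift]
    rw [key, key]
    obtain ⟨N, hN⟩ := cyl_common f hf
    rw [← EU_shift N (fun s => RelMap R fun i => f i s)]
    · apply Filter.eventually_congr
      apply Filter.Eventually.of_forall
      intro s
      exact σ.map_rel R _
    · exact fun s t hst => congrArg _ (funext fun i => hN i s t hst)

lemma KSaut_mk (σ : K ≃[L] K) (f : (ℤ → ℕ) → K) (hf : ∃ N, Cyl N f) :
    KSaut σ (KSmk f hf) = KSmk (fun s => σ (f (shiftE s))) (he_shift σ f hf) :=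
  KSmap_mk _ _ _ EU_shift f hf

lemma cyl_const {K : Type w} (x : K) : ∃ N, Cyl N (fun _ : ℤ → ℕ => x) := ⟨0, fun _ _ _ => rfl⟩

lemma cyl_zero {K : Type w} (g : ℕ → K) : ∃ N, Cyl N (fun s : ℤ → ℕ => g (s 0)) :=
  ⟨1, fun _ _ h => congrArg g (h 0 (by simp) (by simp))⟩

theorem lemmaA [Nonempty K] (σ : K ≃[L] K) {k : ℕ} (a : ℕ → Fin k → K) :
    ∃ (K' : Type w) (_ : L.Structure K') (j : K ↪ₑ[L] K') (τ : K' ≃[L] K') (c : Fin k → K'),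
      (∀ x, τ (j x) = j (σ x)) ∧ ∀ φ : L.Formula (Fin k ⊕ Fin k),
        ((∀ i, ∀ᶠ j in Filter.atTop, φ.Realize (Sum.elim (σ ∘ a i) (a j))) →
          φ.Realize (Sum.elim (τ ∘ c) c)) ∧
        (∀ b : Fin k → K, (∀ᶠ i in Filter.atTop, φ.Realize (Sum.elim (a i) b)) →
          φ.Realize (Sum.elim c (j ∘ b))) ∧
        (∀ b : Fin k → K, (∀ᶠ i in Filter.atTop, φ.Realize (Sum.elim b (a i))) →
          φ.Realize (Sum.elim (j ∘ b) c)) := by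
  refine ⟨KS L K, inferInstance, ⟨fun x => KSmk (fun _ => x) (cyl_const x), ?_⟩, KSaut σ,
    fun l => KSmk (fun s => a (s 0) l) (cyl_zero fun i => a i l), ?_, ?_⟩
  · intro n φ x
    refine (KS_realize φ (fun i _ => x i) (fun i => cyl_const (x i))).trans ?_
    simp
  · intro x
    exact KSaut_mk σ (fun _ => x) (cyl_const x)
  · have two : ∀ (φ : L.Formula (Fin k ⊕ Fin k)) (f g : Fin k → (ℤ → ℕ) → K)
        (hf : ∀ i, ∃ N, Cyl N (f i)) (hg : ∀ i, ∃ N, Cyl N (g i)),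
        φ.Realize (Sum.elim (fun i => KSmk (L := L) (f i) (hf i))
          (fun i => KSmk (L := L) (g i) (hg i))) ↔
        ∀ᶠ s in (EU : Filter (ℤ → ℕ)), φ.Realize (Sum.elim (fun i => f i s) (fun i => g i s)) := by
      intro φ f g hf hg
      have := KS_realize φ (Sum.elim f g) (by rintro (i | i); exacts [hf i, hg i])
      convert this using 2
      · funext i; rcases i with i | i <;> rfl
      · funext s; congr 1
        funext i; rcases i with i | i <;> rfl
    intro φ
    refine ⟨fun h => ?_, fun b h => ?_, fun b h => ?_⟩
    · simp only [Function.comp_def, KSaut_mk]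
      rw [two]
      refine (EU_two (fun i j => φ.Realize (Sum.elim (fun l => σ (a i l)) (fun l => a j l)))).2 ?_
      apply Filter.Eventually.of_forall
      intro i
      exact Nat.hyperfilter_le_atTop (h i)
    · refine (two φ _ _ _ (fun i => cyl_const (b i))).2 ?_
      refine (EU_two (fun i j => φ.Realize (Sum.elim (a j) b))).2 ?_
      apply Filter.Eventually.of_forall
      intro i
      exact Nat.hyperfilter_le_atTop h
    · refine (two φ _ _ (fun i => cyl_const (b i)) _).2 ?_
      refine (EU_two (fun i j => φ.Realize (Sum.elim b (a j)))).2 ?_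
      apply Filter.Eventually.of_forall
      intro i
      exact Nat.hyperfilter_le_atTop h

end LemmaA

section Syntactic

variable {L : FirstOrder.Language.{u, v}} {k : ℕ}

noncomputable def soF (φ : L.Formula (Fin k ⊕ Fin k)) : L.Formula Empty :=
  (Formula.iAlls (α := Empty) (Fin 3 × Fin k)
    ((φ.relabel (Sum.elim (fun l => Sum.inr (0, l)) (fun l => Sum.inr (1, l)))).imp
      ((φ.relabel (Sum.elim (fun l => Sum.inr (1, l)) (fun l => Sum.inr (2, l)))).imp
        (φ.relabel (Sum.elim (fun l => Sum.inr (0, l)) (fun l => Sum.inr (2, l))))))) ⊓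
  (Formula.iAlls (α := Empty) (Fin k) (Formula.not
    (φ.relabel (Sum.elim (fun l => Sum.inr l) (fun l => Sum.inr l)))))

lemma soF_realize (φ : L.Formula (Fin k ⊕ Fin k)) {M : Type*} [L.Structure M] (v : Empty → M) :
    (soF φ).Realize v ↔
      (∀ x y z : Fin k → M, φ.Realize (Sum.elim x y) → φ.Realize (Sum.elim y z) →
        φ.Realize (Sum.elim x z)) ∧ ∀ x : Fin k → M, ¬ φ.Realize (Sum.elim x x) := by
  have e1 : ∀ (i : Fin 3 × Fin k → M) (p q : Fin 3),
      ((fun a => Sum.elim v i a) ∘ (Sum.elim (fun l => Sum.inr (p, l)) (fun l => Sum.inr (q, l))) :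
        Fin k ⊕ Fin k → M) = Sum.elim (fun l => i (p, l)) (fun l => i (q, l)) := by
    intro i p q
    funext l
    rcases l with l | l <;> rfl
  have e2 : ∀ (i : Fin k → M),
      ((fun a => Sum.elim v i a) ∘ (Sum.elim (fun l => Sum.inr l) (fun l => Sum.inr l)) :
        Fin k ⊕ Fin k → M) = Sum.elim i i := by
    intro i
    funext l
    rcases l with l | l <;> rfl
  simp only [soF, Formula.realize_inf, Formula.realize_iAlls, Formula.realize_imp,
    Formula.realize_relabel, Formula.realize_not, e1, e2]
  refine and_congr ⟨fun h x y z => ?_, fun h i => h _ _ _⟩ Iff.rfl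
  exact h (fun p => (![x, y, z] : Fin 3 → Fin k → M) p.1 p.2)

/-- the inclusion of `L`-formulas -/
abbrev ι {α : Type*} (χ : L.Formula α) : (Lsigma L).Formula α :=
  (LHom.sumInl (L := L) (L' := unaryFunctionLanguage)).onFormula χ

def sigF : (Lsigma L).Functions 1 :=
  (Sum.inr () : L.Functions 1 ⊕ unaryFunctionLanguage.Functions 1)

noncomputable def psiF (φ : L.Formula (Fin k ⊕ Fin k)) : (Lsigma L).Formula (Fin k ⊕ Fin k) :=
  Formula.iExs (Fin k)
    (((ι φ).relabel (Sum.elim (fun l => Sum.inl (Sum.inl l)) (fun l => Sum.inr l))) ⊓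
      (((ι φ).relabel (Sum.elim (fun l => Sum.inr l) (fun l => Sum.inl (Sum.inr l)))) ⊓
      (BoundedFormula.subst (ι φ) (Sum.elim (fun l => Term.func (sigF (L := L)) ![Term.var (Sum.inr l)])
        (fun l => Term.var (Sum.inr l))))))

lemma psiF_realize (φ : L.Formula (Fin k ⊕ Fin k)) {M : Type*} [(Lsigma L).Structure M]
    (x y : Fin k → M) :
    (psiF φ).Realize (Sum.elim x y) ↔ ∃ z : Fin k → M, (ι φ).Realize (Sum.elim x z) ∧
      (ι φ).Realize (Sum.elim z y) ∧ (ι φ).Realize (Sum.elim (sigmaMap L M ∘ z) z) := by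
  simp only [psiF, Formula.realize_iExs, Formula.realize_inf, Formula.realize_relabel]
  apply exists_congr
  intro z
  refine and_congr ?_ (and_congr ?_ ?_)
  · apply iff_of_eq; congr 1; funext l; rcases l with l | l <;> rfl
  · apply iff_of_eq; congr 1; funext l; rcases l with l | l <;> rfl
  · refine Iff.trans BoundedFormula.realize_subst ?_
    apply iff_of_eq
    unfold Formula.Realize
    congr 1
    funext l
    rcases l with l | l
    · simp only [Sum.elim_inl, Term.realize_func, sigmaMap, Function.comp]
      congr 1
      funext i
      simp
    · rfl

def unaryStr {M : Type*} (e : M → M) : unaryFunctionLanguage.Structure M where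
  funMap := fun {n} => match n with
    | 0 => fun f => f.elim
    | 1 => fun _ x => e (x 0)
    | _ + 2 => fun f => f.elim
  RelMap := fun r => r.elim

@[reducible] def mkStr {M : Type*} (s : L.Structure M) (e : M → M) : (Lsigma L).Structure M :=
  @sumStructure L unaryFunctionLanguage M s (unaryStr e)

lemma sigmaMap_mkStr {M : Type*} (s : L.Structure M) (e : M → M) :
    @sigmaMap L M (mkStr s e) = e := rfl

lemma realize_mkStr {M : Type*} (s : L.Structure M) (e : M → M) {α : Type*} (χ : L.Formula α)
    (x : α → M) : (letI := mkStr s e; (ι χ).Realize x) ↔ χ.Realize x := by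
  letI := unaryStr e
  exact LHom.realize_onFormula (LHom.sumInl (L := L) (L' := unaryFunctionLanguage)) χ

lemma isModel_mkStr {M : Type*} (s : L.Structure M) (e : M ≃[L] M) (T : L.Theory) (h : M ⊨ T) :
    letI := mkStr s e; IsModelOfTsigma L T M := ⟨h, e, rfl⟩

@[reducible] def red (L : FirstOrder.Language.{u, v}) (M : Type*) [(Lsigma L).Structure M] :
    L.Structure M :=
  (LHom.sumInl (L := L) (L' := unaryFunctionLanguage)).reduct M

lemma realize_red {M : Type*} [(Lsigma L).Structure M] {α : Type*} {n : ℕ}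
    (χ : L.BoundedFormula α n)
    (x : α → M) (xs : Fin n → M) :
    ((LHom.sumInl (L := L) (L' := unaryFunctionLanguage)).onBoundedFormula χ).Realize x xs ↔
      (letI := red L M; χ.Realize x xs) := by
  letI := red L M
  exact LHom.realize_onBoundedFormula (LHom.sumInl (L := L) (L' := unaryFunctionLanguage)) χ

def redEmb {M N : Type*} [(Lsigma L).Structure M] [(Lsigma L).Structure N]
    (f : M ↪[Lsigma L] N) : letI := red L M; letI := red L N; M ↪[L] N :=
  letI := red L M; letI := red L N
  { toFun := f
    inj' := f.injective
    map_fun' := fun F x => f.map_fun (Sum.inl F : (Lsigma L).Functions _) x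
    map_rel' := fun R x => f.map_rel (Sum.inl R : (Lsigma L).Relations _) x }

lemma emb_sigma {M N : Type*} [(Lsigma L).Structure M] [(Lsigma L).Structure N]
    (f : M ↪[Lsigma L] N) (x : M) : f (sigmaMap L M x) = sigmaMap L N (f x) := by
  refine (f.map_fun (sigF (L := L)) ![x]).trans ?_
  change funMap (sigF (L := L)) _ = funMap (sigF (L := L)) ![f x]
  congr 1
  funext i
  fin_cases i
  rfl

/-- building an embedding into an expansion -/
def mkEmb {M N : Type*} [sM : (Lsigma L).Structure M] (sN : L.Structure N) (e : N → N)
    (j : letI := red L M; M ↪[L] N) (hj : ∀ x, j (sigmaMap L M x) = e (j x)) :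
    letI := mkStr sN e; M ↪[Lsigma L] N :=
  letI := red L M
  letI := mkStr sN e
  { toFun := j
    inj' := j.injective
    map_fun' := by
      intro n F x
      rcases F with F | F
      · exact j.map_fun F x
      · match n, F with
        | 0, F => exact F.elim
        | 1, F =>
          have hx : x = ![x 0] := by funext i; fin_cases i; rfl
          rw [hx]
          exact hj (x 0)
        | _ + 2, F => exact F.elim
    map_rel' := by
      intro n R x
      rcases R with R | R
      · exact j.map_rel R x
      · exact R.elim }

end Syntactic

section Mixed

variable {L : FirstOrder.Language.{u, v}}

def elemOf {L' : FirstOrder.Language} {M N : Type*} [L'.Structure M]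
    [L'.Structure N] (f : M ↪[L'] N) (h : Embedding.IsElem f) : M ↪ₑ[L'] N :=
  ⟨f, fun _ φ x => h φ x⟩

theorem mixed (T : L.Theory)
    (hmc : TheoryIsModelComplete L T) (TA : (Lsigma L).Theory)
    (hTA : TheoryIsModelComplete (Lsigma L) TA)
    (h1 : ∀ (M : Type (max u v)) (_ : (Lsigma L).Structure M), IsModelOfTsigma L T M →
          ∃ (N : Type (max u v)) (_ : (Lsigma L).Structure N),
            N ⊨ TA ∧ Nonempty (M ↪[Lsigma L] N))
    (h2 : ∀ (M : Type (max u v)) (_ : (Lsigma L).Structure M), M ⊨ TA →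
          ∃ (N : Type (max u v)) (_ : (Lsigma L).Structure N),
            IsModelOfTsigma L T N ∧ Nonempty (M ↪[Lsigma L] N))
    {α : Type*} {n : ℕ} (χ : L.BoundedFormula α n) :
    ∀ (M N : Type (max u v)) (_ : (Lsigma L).Structure M) (_ : (Lsigma L).Structure N),
      ((M ⊨ TA ∧ IsModelOfTsigma L T N) ∨ (IsModelOfTsigma L T M ∧ N ⊨ TA)) →
      ∀ (f : M ↪[Lsigma L] N) (x : α → M) (xs : Fin n → M),
        ((LHom.sumInl (L := L) (L' := unaryFunctionLanguage)).onBoundedFormula χ).Realize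
          (f ∘ x) (f ∘ xs) ↔
        ((LHom.sumInl (L := L) (L' := unaryFunctionLanguage)).onBoundedFormula χ).Realize x xs := by
  induction χ with
  | falsum => intros; rfl
  | equal t₁ t₂ =>
    intro M N _ _ _ f x xs
    exact BoundedFormula.IsQF.realize_embedding
      (BoundedFormula.IsQF.of_isAtomic (BoundedFormula.IsAtomic.equal _ _)) f
  | rel R ts =>
    intro M N _ _ _ f x xs
    exact BoundedFormula.IsQF.realize_embedding
      (BoundedFormula.IsQF.of_isAtomic (BoundedFormula.IsAtomic.rel _ _)) f
  | imp χ₁ χ₂ ih1 ih2 =>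
    intro M N _ _ h f x xs
    simp only [LHom.onBoundedFormula, BoundedFormula.realize_imp, ih1 M N _ _ h f, ih2 M N _ _ h f]
  | all χ ih =>
    intro M N sM sN h f x xs
    refine ⟨fun hall => ?_, fun hall => ?_⟩
    · simp only [LHom.onBoundedFormula, BoundedFormula.realize_all] at hall ⊢
      intro a
      rw [← ih M N _ _ h f, Fin.comp_snoc]
      exact hall (f a)
    · -- a third structure
      obtain ⟨P, sP, g, hP, hel⟩ : ∃ (P : Type (max u v)) (_ : (Lsigma L).Structure P)
          (g : N ↪[Lsigma L] P),
          ((N ⊨ TA ∧ IsModelOfTsigma L T P) ∨ (IsModelOfTsigma L T N ∧ P ⊨ TA)) ∧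
          ((LHom.sumInl (L := L) (L' := unaryFunctionLanguage)).onBoundedFormula χ.all).Realize
            (g ∘ f ∘ x) (g ∘ f ∘ xs) := by
        rcases h with ⟨hM, hN⟩ | ⟨hM, hN⟩
        · obtain ⟨P, sP, hP, ⟨g⟩⟩ := h1 N sN hN
          refine ⟨P, sP, g, Or.inr ⟨hN, hP⟩, ?_⟩
          have := (elemOf (g.comp f) (hTA M P hM hP (g.comp f))).map_boundedFormula
            ((LHom.sumInl (L := L) (L' := unaryFunctionLanguage)).onBoundedFormula χ.all) x xs
          exact this.2 hall
        · obtain ⟨P, sP, hP, ⟨g⟩⟩ := h2 N sN hN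
          refine ⟨P, sP, g, Or.inl ⟨hN, hP⟩, ?_⟩
          rw [realize_red] at hall ⊢
          letI := red L M
          letI := red L P
          have := (elemOf (redEmb (g.comp f)) (hmc M P hM.1 hP.1 (redEmb (g.comp f)))).map_boundedFormula
            χ.all x xs
          exact this.2 hall
      simp only [LHom.onBoundedFormula, BoundedFormula.realize_all] at hel ⊢
      intro b
      rw [← ih N P _ _ hP g, Fin.comp_snoc]
      exact hel (g b)

end Mixed

section LS

variable {L : FirstOrder.Language.{u, v}} {k : ℕ}

def Good (T : L.Theory) (φ : L.Formula (Fin k ⊕ Fin k)) (M : Type*) [L.Structure M] : Prop :=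
  M ⊨ T ∧ (soF φ).Realize (fun e => e.elim : Empty → M) ∧ ∃ a : ℕ → Fin k → M,
    ∀ i j : ℕ, i < j → φ.Realize (Sum.elim (a i) (a j))

lemma elem_pair {M N : Type*} [L.Structure M] [L.Structure N] (f : M ↪ₑ[L] N)
    (φ : L.Formula (Fin k ⊕ Fin k)) (x y : Fin k → M) :
    φ.Realize (Sum.elim (f ∘ x) (f ∘ y)) ↔ φ.Realize (Sum.elim x y) := by
  rw [← Sum.comp_elim]
  exact f.map_formula φ _

lemma elem_empty {M N : Type*} [L.Structure M] [L.Structure N] (f : M ↪ₑ[L] N)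
    (χ : L.Formula Empty) (x : Empty → M) (y : Empty → N) :
    χ.Realize y ↔ χ.Realize x := by
  rw [← f.map_formula χ x]
  apply iff_of_eq
  congr 1
  funext e
  exact e.elim

lemma Good.up {T : L.Theory} {φ : L.Formula (Fin k ⊕ Fin k)} {M N : Type*} [L.Structure M]
    [L.Structure N] (h : Good T φ M) (f : M ↪ₑ[L] N) : Good T φ N := by
  obtain ⟨h1, h2, a, ha⟩ := h
  exact ⟨f.theory_model_iff T |>.1 h1, (elem_empty f _ _ _).2 h2, fun i => f ∘ a i,
    fun i j hij => (elem_pair f φ _ _).2 (ha i j hij)⟩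

lemma Good.infinite {T : L.Theory} {φ : L.Formula (Fin k ⊕ Fin k)} {M : Type*} [L.Structure M]
    (h : Good T φ M) : Infinite M := by
  obtain ⟨h1, h2, a, ha⟩ := h
  rw [soF_realize] at h2
  by_contra hM
  rw [not_infinite_iff_finite] at hM
  have : Function.Injective a := by
    intro i j hij
    by_contra hne
    rcases lt_or_gt_of_ne hne with h | h
    · have := ha _ _ h
      rw [hij] at this
      exact h2.2 _ this
    · have := ha _ _ h
      rw [hij] at this
      exact h2.2 _ this
  exact not_injective_infinite_finite a this

lemma Good.transfer {T : L.Theory} {φ : L.Formula (Fin k ⊕ Fin k)} {M : Type w} [L.Structure M]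
    (h : Good T φ M) : ∃ (K : Type (max u v)) (_ : L.Structure K), Good T φ K := by
  haveI := h.infinite
  let κ : Cardinal.{max u v} := max Cardinal.aleph0 L.card
  have hκ : Cardinal.lift.{max u v} L.card ≤ Cardinal.lift.{max u v} κ := by
    simp [κ]
  rcases le_total (Cardinal.lift.{w} κ) (Cardinal.lift.{max u v} (Cardinal.mk M)) with hle | hle
  · obtain ⟨h1, h2, a, ha⟩ := h
    let s : Set M := Set.range (fun p : ℕ × Fin k => a p.1 p.2)
    obtain ⟨S, hsS, hS⟩ := exists_elementarySubstructure_card_eq L s κ (le_max_left _ _)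
      (by
        refine le_trans (b := Cardinal.aleph0) ?_ ?_
        · simpa using (Set.countable_range _ : s.Countable)
        · simp [κ])
      (by simp [κ]) hle
    have hSG : Good T φ S := by
      refine ⟨S.subtype.theory_model_iff T |>.2 h1, (elem_empty S.subtype _ _ _).1 h2,
        fun i l => ⟨a i l, hsS ⟨(i, l), rfl⟩⟩, fun i j hij => ?_⟩
      exact (elem_pair S.subtype φ _ _).1 (ha i j hij)
    haveI := hSG.infinite
    obtain ⟨N, ⟨f⟩, -⟩ := exists_elementaryEmbedding_card_eq_of_ge L S κ (by simp [κ]) (by simpa using hS.le)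
    exact ⟨N, inferInstance, hSG.up f⟩
  · obtain ⟨N, ⟨f⟩, -⟩ := exists_elementaryEmbedding_card_eq_of_ge L M κ (by simp [κ]) hle
    exact ⟨N, inferInstance, h.up f⟩

end LS

section Final

variable {L : FirstOrder.Language.{u, v}} {k : ℕ}

structure Comp (T : L.Theory) (TA : (Lsigma L).Theory) : Prop where
  hmc : TheoryIsModelComplete L T
  hTA : TheoryIsModelComplete (Lsigma L) TA
  h1 : ∀ (M : Type (max u v)) (_ : (Lsigma L).Structure M), IsModelOfTsigma L T M →
          ∃ (N : Type (max u v)) (_ : (Lsigma L).Structure N),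
            N ⊨ TA ∧ Nonempty (M ↪[Lsigma L] N)
  h2 : ∀ (M : Type (max u v)) (_ : (Lsigma L).Structure M), M ⊨ TA →
          ∃ (N : Type (max u v)) (_ : (Lsigma L).Structure N),
            IsModelOfTsigma L T N ∧ Nonempty (M ↪[Lsigma L] N)

abbrev RR (φ : L.Formula (Fin k ⊕ Fin k)) {M : Type*} [(Lsigma L).Structure M]
    (x y : Fin k → M) : Prop := (ι φ).Realize (Sum.elim x y)

def OK (φ : L.Formula (Fin k ⊕ Fin k)) (M : Type*) [(Lsigma L).Structure M] : Prop :=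
  (∀ x y z : Fin k → M, RR φ x y → RR φ y z → RR φ x z) ∧ ∀ x : Fin k → M, ¬ RR φ x x

lemma realize_red0 {M : Type*} [(Lsigma L).Structure M] {α : Type*}
    (χ : L.Formula α) (x : α → M) :
    (ι χ).Realize x ↔ (letI := red L M; χ.Realize x) := realize_red χ x default

lemma OK_iff (φ : L.Formula (Fin k ⊕ Fin k)) (M : Type*) [(Lsigma L).Structure M]
    (v : Empty → M) : (ι (soF φ)).Realize v ↔ OK φ M := by
  unfold OK RR
  simp only [realize_red0]
  exact @soF_realize L k φ M (red L M) v

lemma Comp.map {T : L.Theory} {TA : (Lsigma L).Theory} (h : Comp T TA)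
    {M N : Type (max u v)} [sM : (Lsigma L).Structure M] [sN : (Lsigma L).Structure N]
    (hor : (M ⊨ TA ∧ IsModelOfTsigma L T N) ∨ (IsModelOfTsigma L T M ∧ N ⊨ TA))
    (f : M ↪[Lsigma L] N) {α : Type*} (χ : L.Formula α) (x : α → M) :
    (ι χ).Realize (f ∘ x) ↔ (ι χ).Realize x := by
  have := mixed T h.hmc TA h.hTA h.h1 h.h2 χ M N sM sN hor f x default
  refine Iff.trans (iff_of_eq ?_) this
  unfold Formula.Realize
  congr 1
  exact Subsingleton.elim _ _

lemma Comp.pair {T : L.Theory} {TA : (Lsigma L).Theory} (h : Comp T TA)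
    {M N : Type (max u v)} [(Lsigma L).Structure M] [(Lsigma L).Structure N]
    (hor : (M ⊨ TA ∧ IsModelOfTsigma L T N) ∨ (IsModelOfTsigma L T M ∧ N ⊨ TA))
    (f : M ↪[Lsigma L] N) (φ : L.Formula (Fin k ⊕ Fin k)) (x y : Fin k → M) :
    RR φ (f ∘ x) (f ∘ y) ↔ RR φ x y := by
  unfold RR
  rw [← Sum.comp_elim]
  exact h.map hor f φ _

lemma Comp.ok {T : L.Theory} {TA : (Lsigma L).Theory} (h : Comp T TA)
    {M N : Type (max u v)} [(Lsigma L).Structure M] [(Lsigma L).Structure N]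
    (hor : (M ⊨ TA ∧ IsModelOfTsigma L T N) ∨ (IsModelOfTsigma L T M ∧ N ⊨ TA))
    (f : M ↪[Lsigma L] N) (φ : L.Formula (Fin k ⊕ Fin k)) : OK φ N ↔ OK φ M := by
  rw [← OK_iff φ M (fun e => e.elim), ← OK_iff φ N (f ∘ (fun e => e.elim))]
  exact h.map hor f _ _

lemma aut_pair {T : L.Theory} {M : Type*} [(Lsigma L).Structure M] (h : IsModelOfTsigma L T M)
    (φ : L.Formula (Fin k ⊕ Fin k)) (x y : Fin k → M) :
    RR φ (sigmaMap L M ∘ x) (sigmaMap L M ∘ y) ↔ RR φ x y := by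
  letI := red L M
  obtain ⟨-, e, he⟩ := h
  unfold RR
  rw [realize_red0, realize_red0, ← he]
  exact elem_pair e.toElementaryEmbedding φ x y

/-- an ascending chain which is an orbit -/
def Chain (φ : L.Formula (Fin k ⊕ Fin k)) {M : Type*} [(Lsigma L).Structure M]
    (A : ℕ → Fin k → M) : Prop :=
  (∀ i, sigmaMap L M ∘ A i = A (i + 1)) ∧ ∀ i j, i < j → RR φ (A i) (A j)

lemma step1 {T : L.Theory} {φ : L.Formula (Fin k ⊕ Fin k)} {K0 : Type w} [L.Structure K0]
    (h : Good T φ K0) : ∃ (K : Type w) (_ : (Lsigma L).Structure K),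
      IsModelOfTsigma L T K ∧ OK φ K ∧ ∃ A : ℕ → Fin k → K, Chain φ A := by
  haveI := h.infinite
  obtain ⟨h1, h2, a, ha⟩ := h
  obtain ⟨K, sK, j, τ, c, -, hc⟩ := lemmaA (FirstOrder.Language.Equiv.refl L K0) a
  have hτ := (hc φ).1 (fun i => by
    filter_upwards [Filter.eventually_gt_atTop i] with j hj
    exact ha i j hj)
  have hce : φ.Realize (Sum.elim c (τ.symm ∘ c)) := by
    rw [← elem_pair τ.toElementaryEmbedding φ]
    convert hτ using 2
    congr 1
    funext l
    exact τ.apply_symm_apply (c l)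
  letI := mkStr sK τ.symm
  have hm : IsModelOfTsigma L T K := isModel_mkStr sK τ.symm T (j.theory_model_iff T |>.1 h1)
  have hok : OK φ K := by
    rw [← OK_iff φ K (fun e => e.elim)]
    exact (realize_mkStr sK τ.symm _ _).2 ((elem_empty j _ _ _).2 h2)
  refine ⟨K, mkStr sK τ.symm, hm, hok, fun i => (sigmaMap L K)^[i] ∘ c, ?_, ?_⟩
  · intro i
    funext l
    exact (Function.iterate_succ_apply' (sigmaMap L K) i (c l)).symm
  · have hs : ∀ i, RR φ ((sigmaMap L K)^[i] ∘ c) ((sigmaMap L K)^[i + 1] ∘ c) := by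
      intro i
      induction i with
      | zero => exact (realize_mkStr sK τ.symm _ _).2 hce
      | succ i ih =>
        rw [Function.iterate_succ' _ (i + 1)]
        nth_rewrite 1 [Function.iterate_succ']
        exact (aut_pair hm φ _ _).2 ih
    intro i j hij
    induction j, hij using Nat.le_induction with
    | base => exact hs i
    | succ j hj ih => exact hok.1 _ _ _ ih (hs j)

lemma emb_sigma_comp {M N : Type*} [(Lsigma L).Structure M] [(Lsigma L).Structure N]
    (f : M ↪[Lsigma L] N) (z : Fin k → M) :
    sigmaMap L N ∘ f ∘ z = f ∘ sigmaMap L M ∘ z :=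
  funext fun l => (emb_sigma f (z l)).symm

lemma emb_chain {φ : L.Formula (Fin k ⊕ Fin k)} {M N : Type*} [(Lsigma L).Structure M]
    [(Lsigma L).Structure N] (f : M ↪[Lsigma L] N)
    (hf : ∀ x y, RR φ (f ∘ x) (f ∘ y) ↔ RR φ x y) {A : ℕ → Fin k → M} (hA : Chain φ A) :
    Chain φ (fun i => f ∘ A i) := by
  refine ⟨fun i => ?_, fun i j hij => (hf _ _).2 (hA.2 i j hij)⟩
  change sigmaMap L N ∘ f ∘ A i = f ∘ A (i + 1)
  rw [← hA.1 i]
  exact emb_sigma_comp f (A i)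

lemma step3 {T : L.Theory} {TA : (Lsigma L).Theory} (h : Comp T TA)
    {φ : L.Formula (Fin k ⊕ Fin k)} {N : Type (max u v)} [sN : (Lsigma L).Structure N]
    (hN : N ⊨ TA) (hok : OK φ N) {A : ℕ → Fin k → N} (hA : Chain φ A) (n : ℕ) :
    ¬ (psiF φ).Realize (Sum.elim (A 0) (A n)) := by
  rw [psiF_realize]
  rintro ⟨z, hz1, hz2, hz3⟩
  obtain ⟨P, sP, hP, ⟨f⟩⟩ := h.h2 N sN hN
  have hf := h.pair (Or.inl ⟨hN, hP⟩) f φ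
  have hokP := (h.ok (Or.inl ⟨hN, hP⟩) f φ).2 hok
  have hAP := emb_chain f hf hA
  have hz3' : RR φ (sigmaMap L P ∘ f ∘ z) (f ∘ z) := by
    rw [emb_sigma_comp f z]
    exact (hf _ _).2 hz3
  have key : ∀ i, RR φ (f ∘ A i) (f ∘ z) := by
    intro i
    induction i with
    | zero => exact (hf _ _).2 hz1
    | succ i ih =>
      have h4 := (aut_pair hP φ _ _).2 ih
      have h5 := hAP.1 i
      simp only at h5
      rw [h5] at h4
      exact hokP.1 _ _ _ h4 hz3'
  exact hokP.2 _ (hokP.1 _ _ _ (key n) ((hf _ _).2 hz2))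

abbrev HP (N : Type w) : Type w := ((Filter.hyperfilter ℕ : Ultrafilter ℕ) : Filter ℕ).Product (fun _ => N)

noncomputable abbrev toHP {N : Type w} (f : ℕ → N) : HP N :=
  Quotient.mk' (s := ((Filter.hyperfilter ℕ : Ultrafilter ℕ) : Filter ℕ).productSetoid (fun _ => N)) f

noncomputable def diagHP (L' : FirstOrder.Language) (N : Type w) [L'.Structure N] [Nonempty N] :
    N ↪ₑ[L'] HP N where
  toFun := fun x => toHP (fun _ => x)
  map_formula' := by
    intro n χ x
    refine (Ultraproduct.realize_formula_cast (u := Filter.hyperfilter ℕ) (M := fun _ => N) χ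
      (fun i _ => x i)).trans ?_
    simp

lemma HP_pair {L' : FirstOrder.Language} {N : Type w} [L'.Structure N] [Nonempty N]
    (χ : L'.Formula (Fin k ⊕ Fin k)) (x : Fin k → N) (b : ℕ → Fin k → N) :
    χ.Realize (Sum.elim (diagHP L' N ∘ x) (fun l => toHP (fun n => b n l))) ↔
      ∀ᶠ n in ((Filter.hyperfilter ℕ : Ultrafilter ℕ) : Filter ℕ),
        χ.Realize (Sum.elim x (b n)) := by
  have := Ultraproduct.realize_formula_cast (u := Filter.hyperfilter ℕ) (M := fun _ => N) χ
      (Sum.elim (fun l _ => x l) (fun l n => b n l))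
  refine Iff.trans (iff_of_eq ?_) (this.trans (iff_of_eq ?_))
  · congr 1
    funext l
    rcases l with l | l <;> rfl
  · congr 1
    funext n
    congr 1
    funext l
    rcases l with l | l <;> rfl

lemma step5 {T : L.Theory} {TA : (Lsigma L).Theory} (h : Comp T TA)
    {φ : L.Formula (Fin k ⊕ Fin k)} {N : Type (max u v)} [sN : (Lsigma L).Structure N]
    [Nonempty N]
    (hN : N ⊨ TA) {A : ℕ → Fin k → N} (hA : Chain φ A) (b : Fin k → N)
    (hb : ∀ i, RR φ (A i) b) :
    (psiF φ).Realize (Sum.elim (A 0) b) := by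
  obtain ⟨P, sP, hP, ⟨g⟩⟩ := h.h2 N sN hN
  have hg := h.pair (Or.inl ⟨hN, hP⟩) g φ
  have hAP := emb_chain g hg hA
  letI rP := red L P
  obtain ⟨hPT, e, he⟩ := id hP
  haveI : Nonempty P := Nonempty.map g inferInstance
  obtain ⟨K, sK, j, τ, c, hj, hc⟩ := lemmaA e (fun i => g ∘ A i)
  obtain ⟨c1, c2, c3⟩ := hc φ
  have c1' := c1 (fun i => by
    filter_upwards [Filter.eventually_gt_atTop (i + 1)] with j hij
    have h5 := hAP.1 i
    simp only at h5
    rw [he, h5]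
    exact (realize_red0 φ _).1 (hAP.2 (i + 1) j hij))
  have c2' := c2 (g ∘ b) (Filter.Eventually.of_forall fun i =>
    (realize_red0 φ _).1 ((hg _ _).2 (hb i)))
  have c3' := c3 (g ∘ A 0) (by
    filter_upwards [Filter.eventually_gt_atTop 0] with i hi
    exact (realize_red0 φ _).1 (hAP.2 0 i hi))
  letI sK' := mkStr sK τ
  have hK : IsModelOfTsigma L T K := isModel_mkStr sK τ T (j.theory_model_iff T |>.1 hPT)
  let jj : P ↪[Lsigma L] K := mkEmb sK τ j.toEmbedding (fun x => by
    rw [← he]; exact (hj x).symm)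
  obtain ⟨Q, sQ, hQ, ⟨q⟩⟩ := h.h1 K sK' hK
  have hq := h.pair (Or.inr ⟨hK, hQ⟩) q φ
  let F : N ↪[Lsigma L] Q := q.comp (jj.comp g)
  have hel := elem_pair (elemOf F (h.hTA N Q hN hQ F)) (psiF φ) (A 0) b
  refine hel.1 ?_
  refine (psiF_realize φ _ _).2 ⟨q ∘ c, ?_, ?_, ?_⟩
  · exact (hq _ _).2 ((realize_mkStr sK τ φ _).2 c3')
  · exact (hq _ _).2 ((realize_mkStr sK τ φ _).2 c2')
  · have := (hq _ _).2 ((realize_mkStr sK τ φ _).2 c1')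
    rw [emb_sigma_comp q c]
    exact this

lemma final {T : L.Theory} {TA : (Lsigma L).Theory} (h : Comp T TA) (hk : 1 ≤ k)
    {φ : L.Formula (Fin k ⊕ Fin k)} {M : Type w} [L.Structure M] (hM : Good T φ M) : False := by
  obtain ⟨K0, s0, h0⟩ := hM.transfer
  obtain ⟨K, sK, hK, hok, A0, hA0⟩ := step1 h0
  obtain ⟨N, sN, hN, ⟨f⟩⟩ := h.h1 K sK hK
  have hok' := (h.ok (Or.inr ⟨hK, hN⟩) f φ).2 hok
  obtain ⟨A, hA⟩ : ∃ A : ℕ → Fin k → N, Chain φ A :=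
    ⟨_, emb_chain f (h.pair (Or.inr ⟨hK, hN⟩) f φ) hA0⟩
  have hn := step3 h hN hok' hA
  haveI : Nonempty N := ⟨A 0 ⟨0, hk⟩⟩
  let d := diagHP (Lsigma L) N
  let b : Fin k → HP N := fun l => toHP (fun n => A n l)
  have hN' : HP N ⊨ TA := d.theory_model_iff TA |>.1 hN
  have hA' : Chain φ (fun i => d ∘ A i) :=
    emb_chain d.toEmbedding (fun x y => elem_pair d (ι φ) x y) hA
  have hb : ∀ i, RR φ (d ∘ A i) b := by
    intro i
    refine (HP_pair (ι φ) (A i) A).2 (Nat.hyperfilter_le_atTop ?_)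
    filter_upwards [Filter.eventually_gt_atTop i] with j hij
    exact hA.2 i j hij
  have := step5 h hN' hA' b hb
  have h6 := (HP_pair (psiF φ) (A 0) A).1 this
  obtain ⟨n, hn'⟩ := h6.exists
  exact hn n hn'

end Final

/-- Let `T` be a model complete `L`-theory.  If `T` has a model whose
complete theory has the strict order property (witnessed by a formula `φ` in two
`k`-tuples of variables defining a transitive irreflexive relation with an infinite
ascending chain), then `T_σ` has no model companion. -/
theorem stmt_0 (L : FirstOrder.Language.{u, v}) (T : L.Theory)
    (hmc : TheoryIsModelComplete L T)
    (M₀ : Type w) (_ : L.Structure M₀) (hM₀ : M₀ ⊨ T)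
    (k : ℕ) (hk : 1 ≤ k) (φ : L.Formula (Fin k ⊕ Fin k))
    (htrans : Transitive (fun x y : Fin k → M₀ => φ.Realize (Sum.elim x y)))
    (hirrefl : Irreflexive (fun x y : Fin k → M₀ => φ.Realize (Sum.elim x y)))
    (a : ℕ → Fin k → M₀)
    (hchain : ∀ i j : ℕ, i < j → φ.Realize (Sum.elim (a i) (a j))) :
    ¬ ∃ TA : (Lsigma L).Theory,
        TheoryIsModelComplete (Lsigma L) TA ∧
        (∀ (M : Type (max u v)) (_ : (Lsigma L).Structure M), IsModelOfTsigma L T M →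
          ∃ (N : Type (max u v)) (_ : (Lsigma L).Structure N),
            N ⊨ TA ∧ Nonempty (M ↪[Lsigma L] N)) ∧
        (∀ (M : Type (max u v)) (_ : (Lsigma L).Structure M), M ⊨ TA →
          ∃ (N : Type (max u v)) (_ : (Lsigma L).Structure N),
            IsModelOfTsigma L T N ∧ Nonempty (M ↪[Lsigma L] N)) := by
  rintro ⟨TA, hTA, h1, h2⟩
  have hG : Good T φ M₀ :=
    ⟨hM₀, (soF_realize φ _).2 ⟨fun x y z hxy hyz => htrans hxy hyz, fun x => hirrefl x⟩, a, hchain⟩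
  exact final ⟨hmc, hTA, h1, h2⟩ hk hG
end

section
/- Let T be an L-theory, k ≥ 1, and φ(x,y) an L-formula in two k-tuples of free variables. Suppose some model of T contains an L-indiscernible sequence (b_i)_{i<ω} of k-tuples such that the relation u < v defined by φ(u,v) is transitive and irreflexive and b_i < b_j for all i < j < ω. Then there are a model M₀ of T, k-tuples (a_i)_{i<ω} in M₀ with a_i < a_j (in the sense of φ) for all i < j < ω, and an L-automorphism σ₀ of M₀ such that σ₀(a_i) = a_{i+1} (applied componentwise) for every i < ω. -/
universe u v w

open FirstOrder Language Structure

/-- A sequence `b` of `k`-tuples in an `L`-structure `M` is `L`-indiscernible if any two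
strictly increasing finite subsequences of the same length satisfy the same `L`-formulas
(with the tuples concatenated, i.e. in the variables `Fin n × Fin k`). -/
def IsIndiscernibleSeq (L : FirstOrder.Language.{u, v}) (M : Type w) [L.Structure M]
    (k : ℕ) (b : ℕ → Fin k → M) : Prop :=
  ∀ (n : ℕ) (i j : Fin n → ℕ), StrictMono i → StrictMono j →
    ∀ ψ : L.Formula (Fin n × Fin k),
      ψ.Realize (fun p => b (i p.1) p.2) ↔ ψ.Realize (fun p => b (j p.1) p.2)

namespace IterUlt

open Filter

/-- Iterated ultrafilter on windows `[a, a+n)`. -/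
noncomputable def E : ℕ → ℤ → Ultrafilter (ℤ → ℕ)
  | 0, _ => pure (fun _ => 0)
  | n + 1, a => (hyperfilter ℕ).bind fun p => (E n (a + 1)).map fun x => Function.update x a p

theorem E_zero (a : ℤ) (P : (ℤ → ℕ) → Prop) :
    (∀ᶠ x in (E 0 a : Filter (ℤ → ℕ)), P x) ↔ P (fun _ => 0) := Iff.rfl

theorem E_succ (n : ℕ) (a : ℤ) (P : (ℤ → ℕ) → Prop) :
    (∀ᶠ x in (E (n+1) a : Filter (ℤ → ℕ)), P x) ↔
      ∀ᶠ p in (hyperfilter ℕ : Filter ℕ), ∀ᶠ x in (E n (a+1) : Filter (ℤ → ℕ)),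
        P (Function.update x a p) := Iff.rfl

theorem E_left (n : ℕ) (a : ℤ) (P : (ℤ → ℕ) → Prop) (h : DependsOn P (Set.Ici (a+1))) :
    (∀ᶠ x in (E (n+1) a : Filter (ℤ → ℕ)), P x) ↔
      ∀ᶠ x in (E n (a+1) : Filter (ℤ → ℕ)), P x := by
  rw [E_succ]
  have : ∀ x p, P (Function.update x a p) = P x := fun x p => h fun i hi => by
    have : i ≠ a := by rintro rfl; simp at hi
    simp [this]
  simp only [this, eventually_const]

theorem E_right (n : ℕ) : ∀ (a : ℤ) (P : (ℤ → ℕ) → Prop), DependsOn P (Set.Iio (a+n)) →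
    ((∀ᶠ x in (E (n+1) a : Filter (ℤ → ℕ)), P x) ↔
      ∀ᶠ x in (E n a : Filter (ℤ → ℕ)), P x) := by
  induction n with
  | zero =>
    intro a P h
    rw [E_succ]
    have : ∀ x p, P (Function.update x a p) = P x := fun x p => h fun i hi => by
      have : i ≠ a := by rintro rfl; simp at hi
      simp [this]
    simp only [this, eventually_const]
    exact Iff.rfl
  | succ n ih =>
    intro a P h
    rw [E_succ, E_succ n]
    refine eventually_congr (Eventually.of_forall fun p => ?_)
    apply ih
    intro x y hxy
    apply h
    intro i hi
    by_cases hia : i = a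
    · subst hia; simp
    · simp only [Function.update_of_ne hia]
      apply hxy
      simp only [Set.mem_Iio] at hi ⊢
      push_cast at hi
      linarith

theorem E_stab (c a : ℤ) (m n : ℕ) (P : (ℤ → ℕ) → Prop) (h : DependsOn P (Set.Ico c (c+m)))
    (h1 : a ≤ c) (h2 : c + m ≤ a + n) :
    (∀ᶠ x in (E n a : Filter (ℤ → ℕ)), P x) ↔
      ∀ᶠ x in (E m c : Filter (ℤ → ℕ)), P x := by
  have A : ∀ r : ℕ, (∀ᶠ x in (E (m+r) c : Filter (ℤ → ℕ)), P x) ↔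
      ∀ᶠ x in (E m c : Filter (ℤ → ℕ)), P x := by
    intro r
    induction r with
    | zero => rfl
    | succ r ih =>
      rw [← ih]
      apply E_right (m+r) c P
      refine h.mono fun i hi => ?_
      simp only [Set.mem_Ico, Set.mem_Iio] at hi ⊢
      push_cast
      linarith [hi.2]
  have B : ∀ (l q : ℕ), (∀ᶠ x in (E (q+l) (c-l) : Filter (ℤ → ℕ)), P x) ↔
      ∀ᶠ x in (E q c : Filter (ℤ → ℕ)), P x := by
    intro l q
    induction l with
    | zero => simp
    | succ l ih =>
      rw [← ih]
      have := E_left (q+l) (c - (l+1 : ℕ)) P (by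
        refine h.mono fun i hi => ?_
        simp only [Set.mem_Ico, Set.mem_Ici] at hi ⊢
        push_cast
        linarith [hi.1])
      have e : c - ((l+1 : ℕ) : ℤ) + 1 = c - l := by push_cast; ring
      rw [e] at this
      exact this
  obtain ⟨l, hl⟩ := Int.le.dest h1
  obtain ⟨r, hr⟩ : ∃ r : ℕ, n = (m + r) + l := ⟨n - m - l, by omega⟩
  have : a = c - l := by linarith
  rw [this, hr, B, A]

/-- shift -/
def sh (x : ℤ → ℕ) : ℤ → ℕ := fun i => x (i+1)

theorem E_sh (n : ℕ) : ∀ (a : ℤ) (P : (ℤ → ℕ) → Prop),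
    (∀ᶠ x in (E n (a+1) : Filter (ℤ → ℕ)), P (sh x)) ↔
      ∀ᶠ x in (E n a : Filter (ℤ → ℕ)), P x := by
  induction n with
  | zero => intro a P; exact Iff.rfl
  | succ n ih =>
    intro a P
    rw [E_succ, E_succ]
    refine eventually_congr (Eventually.of_forall fun p => ?_)
    rw [← ih (a+1)]
    have : ∀ x, sh (Function.update x (a+1) p) = Function.update (sh x) a p := by
      intro x; ext i
      by_cases hi : i = a
      · subst hi; simp [sh]
      · have : i + 1 ≠ a + 1 := by omega
        simp [sh, hi]
    simp only [this]

/-- The limit ultrafilter. -/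
noncomputable def W : Ultrafilter (ℤ → ℕ) :=
  (hyperfilter ℕ).bind fun n => E (2*n) (-n)

theorem W_iff (P : (ℤ → ℕ) → Prop) :
    (∀ᶠ x in (W : Filter (ℤ → ℕ)), P x) ↔
      ∀ᶠ n in (hyperfilter ℕ : Filter ℕ), ∀ᶠ x in (E (2*n) (-n) : Filter (ℤ → ℕ)), P x := Iff.rfl

theorem ev_ge (N : ℕ) : ∀ᶠ n in (hyperfilter ℕ : Filter ℕ), N ≤ n := by
  have : (hyperfilter ℕ : Filter ℕ) ≤ atTop := by
    rw [← Nat.cofinite_eq_atTop]; exact hyperfilter_le_cofinite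
  exact this (eventually_ge_atTop N)

theorem W_stab (c : ℤ) (m : ℕ) (P : (ℤ → ℕ) → Prop) (h : DependsOn P (Set.Ico c (c+m))) :
    (∀ᶠ x in (W : Filter (ℤ → ℕ)), P x) ↔ ∀ᶠ x in (E m c : Filter (ℤ → ℕ)), P x := by
  rw [W_iff, ← eventually_const (f := (hyperfilter ℕ : Filter ℕ))
    (p := ∀ᶠ x in (E m c : Filter (ℤ → ℕ)), P x)]
  apply eventually_congr
  filter_upwards [ev_ge (c.natAbs + m)] with n hn
  apply E_stab c _ _ _ P h <;> omega

/-- finite support -/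
def FS {β : Type*} (F : (ℤ → ℕ) → β) : Prop := ∃ (c : ℤ) (m : ℕ), DependsOn F (Set.Ico c (c+m))

theorem W_sh (P : (ℤ → ℕ) → Prop) (h : FS P) :
    (∀ᶠ x in (W : Filter (ℤ → ℕ)), P (sh x)) ↔ ∀ᶠ x in (W : Filter (ℤ → ℕ)), P x := by
  obtain ⟨c, m, h⟩ := h
  rw [W_stab c m P h, W_stab (c+1) m (fun x => P (sh x)), E_sh]
  intro x y hxy
  apply h
  intro i hi
  apply hxy
  simp only [Set.mem_Ico] at hi ⊢
  constructor <;> linarith [hi.1, hi.2]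

theorem FS.comp {β γ : Type*} {F : (ℤ → ℕ) → β} (h : FS F) (g : β → γ) : FS fun x => g (F x) := by
  obtain ⟨c, m, h⟩ := h
  exact ⟨c, m, fun x y hxy => congrArg g (h hxy)⟩

theorem FS.pi {ι : Type*} [Finite ι] {β : Type*} {F : ι → (ℤ → ℕ) → β} (h : ∀ i, FS (F i)) :
    FS fun x i => F i x := by
  cases nonempty_fintype ι
  choose c m h using h
  let N : ℕ := ∑ i, ((c i).natAbs + m i)
  have hN : ∀ i, (c i).natAbs + m i ≤ N := fun i =>
    Finset.single_le_sum (f := fun i => (c i).natAbs + m i) (fun _ _ => Nat.zero_le _)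
      (Finset.mem_univ i)
  refine ⟨-N, 2*N, fun x y hxy => funext fun i => h i fun j hj => hxy j ?_⟩
  have := hN i
  simp only [Set.mem_Ico] at hj ⊢
  omega

theorem FS.pair {β γ : Type*} {F : (ℤ → ℕ) → β} {G : (ℤ → ℕ) → γ} (hF : FS F) (hG : FS G) :
    FS fun x => (F x, G x) := by
  obtain ⟨c, m, h⟩ := hF
  obtain ⟨c', m', h'⟩ := hG
  refine ⟨-(c.natAbs + m + c'.natAbs + m' : ℕ), 2 * (c.natAbs + m + c'.natAbs + m'),
    fun x y hxy => Prod.ext (h fun j hj => hxy j ?_) (h' fun j hj => hxy j ?_)⟩ <;>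
  · simp only [Set.mem_Ico] at hj ⊢
    omega

theorem FS.coord (i : ℤ) : FS fun x : ℤ → ℕ => x i :=
  ⟨i, 1, fun x y hxy => hxy i (by simp)⟩

theorem FS.sh {β : Type*} {F : (ℤ → ℕ) → β} (h : FS F) : FS fun x => F (sh x) := by
  obtain ⟨c, m, h⟩ := h
  refine ⟨c+1, m, fun x y hxy => h fun i hi => hxy _ ?_⟩
  simp only [Set.mem_Ico] at hi ⊢
  constructor <;> linarith [hi.1, hi.2]

/-- inverse shift -/
def shi (x : ℤ → ℕ) : ℤ → ℕ := fun i => x (i-1)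

theorem FS.shi {β : Type*} {F : (ℤ → ℕ) → β} (h : FS F) : FS fun x => F (shi x) := by
  obtain ⟨c, m, h⟩ := h
  refine ⟨c-1, m, fun x y hxy => h fun i hi => hxy _ ?_⟩
  simp only [Set.mem_Ico] at hi ⊢
  constructor <;> linarith [hi.1, hi.2]

theorem W_lt (i j : ℤ) (hij : i < j) : ∀ᶠ x in (W : Filter (ℤ → ℕ)), x i < x j := by
  obtain ⟨m, hm⟩ := Int.le.dest hij.le
  rw [W_stab i (m+1) (fun x => x i < x j), E_succ]
  · refine Eventually.of_forall fun p => ?_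
    have hj : j ≠ i := hij.ne'
    simp only [Function.update_self, Function.update_of_ne hj]
    rw [E_stab j (i+1) 1 m (fun x => p < x j), E_succ]
    · simp only [Function.update_self, eventually_const]
      exact ev_ge (p+1)
    · intro x y hxy
      simp only [hxy j (by simp)]
    · omega
    · push_cast; omega
  · intro x y hxy
    have h1 := hxy i (by simp only [Set.mem_Ico]; push_cast; omega)
    have h2 := hxy j (by simp only [Set.mem_Ico]; push_cast; omega)
    simp only [h1, h2]

section struct

variable {L : FirstOrder.Language.{u, v}} {M : Type w} [L.Structure M]

/-- finitely supported functions -/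
abbrev A (M : Type w) : Type w := {F : (ℤ → ℕ) → M // FS F}

/-- equality mod `W` -/
def st (M : Type w) : Setoid (A M) where
  r F G := ∀ᶠ x in (W : Filter (ℤ → ℕ)), F.1 x = G.1 x
  iseqv := ⟨fun _ => Eventually.of_forall fun _ => rfl, fun h => h.mono fun _ h => h.symm,
    fun h h' => by filter_upwards [h, h'] with x a b using a.trans b⟩

/-- pointwise prestructure -/
instance pre : L.Prestructure (st M) :=
  { st M with
    toStructure :=
      { funMap := fun {_} f x => ⟨fun a => funMap f fun i => (x i).1 a,
          (FS.pi fun i => (x i).2).comp (funMap f)⟩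
        RelMap := fun {_} r x => ∀ᶠ a in (W : Filter (ℤ → ℕ)), RelMap r fun i => (x i).1 a }
    fun_equiv := fun {n} f x y xy => by
      have : ∀ᶠ a in (W : Filter (ℤ → ℕ)), ∀ i, (x i).1 a = (y i).1 a := eventually_all.2 xy
      exact this.mono fun a ha => congrArg (funMap f) (funext ha)
    rel_equiv := fun {n} r x y xy => by
      have : ∀ᶠ a in (W : Filter (ℤ → ℕ)), ∀ i, (x i).1 a = (y i).1 a := eventually_all.2 xy
      exact propext (eventually_congr (this.mono fun a ha => by rw [funext ha])) }

/-- the limit ultrapower -/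
abbrev Q (M : Type w) : Type w := Quotient (st M)

/-- class map -/
def cl (F : A M) : Q M := Quotient.mk (st M) F

theorem term_cl {β : Type*} (x : β → A M) (t : L.Term β) (F : A M)
    (hF : ∀ a, F.1 a = t.realize fun i => (x i).1 a) :
    (t.realize fun i => cl (x i)) = cl F := by
  have := @Term.realize_quotient_mk' L _ (st M) pre _ t x
  refine this.trans (congrArg cl (Subtype.ext (funext fun a => ?_)))
  rw [hF]
  clear hF this
  induction t with
  | var => rfl
  | func f ts ih =>
    simp only [Term.realize]
    rw [← funext ih]
    rfl

theorem FS_term {β : Type*} [Finite β] (x : β → A M) (t : L.Term β) :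
    FS fun a => t.realize fun i => (x i).1 a :=
  (FS.pi fun i => (x i).2).comp fun v => t.realize v

theorem los [Nonempty M] {β : Type*} [Finite β] {n : ℕ} (φ : L.BoundedFormula β n)
    (x : β → A M) (v : Fin n → A M) :
    (φ.Realize (fun i => cl (x i)) (fun i => cl (v i))) ↔
      ∀ᶠ a in (W : Filter (ℤ → ℕ)), φ.Realize (fun i => (x i).1 a) fun i => (v i).1 a := by
  have h1 : ∀ {n : ℕ} (v : Fin n → A M), (Sum.elim (fun i => cl (x i)) fun i => cl (v i)) =
      fun i => cl (Sum.elim x v i) :=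
    fun v => funext fun i => Sum.casesOn i (fun i => rfl) fun i => rfl
  have h2 : ∀ {n : ℕ} (v : Fin n → A M) a, (Sum.elim (fun i => (x i).1 a) fun i => (v i).1 a) =
      fun i => (Sum.elim x v i).1 a :=
    fun v a => funext fun i => Sum.casesOn i (fun i => rfl) fun i => rfl
  induction φ with
  | falsum => simp only [BoundedFormula.Realize, eventually_const]
  | equal t₁ t₂ =>
    simp only [BoundedFormula.Realize, h1, h2]
    rw [term_cl _ t₁ ⟨_, FS_term _ t₁⟩ (fun _ => rfl), term_cl _ t₂ ⟨_, FS_term _ t₂⟩ (fun _ => rfl)]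
    exact Quotient.eq''
  | rel R ts =>
    simp only [BoundedFormula.Realize, h1, h2]
    have : ∀ i, (ts i).realize (fun i => cl (Sum.elim x v i)) = _ :=
      fun i => term_cl _ (ts i) ⟨_, FS_term _ (ts i)⟩ (fun _ => rfl)
    simp only [this]
    exact relMap_quotient_mk' (st M) R _
  | imp _ _ ih ih' =>
    simp only [BoundedFormula.Realize, ih v, ih' v]
    rw [Ultrafilter.eventually_imp]
  | @all k φ ih =>
    simp only [BoundedFormula.Realize]
    have h3 : ∀ m : A M, (Fin.snoc (fun i => cl (v i)) (cl m) : Fin (k+1) → Q M) =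
        fun i => cl ((Fin.snoc v m : Fin (k+1) → A M) i) := by
      refine fun m => funext (Fin.reverseInduction ?_ fun i _ => ?_)
      · simp only [Fin.snoc_last]
      · simp only [Fin.snoc_castSucc]
    have h4 : ∀ (m : A M) a, (fun i => ((Fin.snoc v m : Fin (k+1) → A M) i).1 a) =
        (Fin.snoc (fun i => (v i).1 a) (m.1 a) : Fin (k+1) → M) := by
      refine fun m a => funext (Fin.reverseInduction ?_ fun i _ => ?_)
      · simp only [Fin.snoc_last]
      · simp only [Fin.snoc_castSucc]
    have h5 : (∀ q : Q M, φ.Realize (fun i => cl (x i)) (Fin.snoc (fun i => cl (v i)) q)) ↔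
        ∀ m : A M, ∀ᶠ a in (W : Filter (ℤ → ℕ)),
          φ.Realize (fun i => (x i).1 a) (Fin.snoc (fun i => (v i).1 a) (m.1 a)) := by
      refine Iff.trans Quotient.forall (forall_congr' fun m => ?_)
      have := ih (Fin.snoc v m)
      simp only [h4] at this
      refine Iff.trans ?_ this
      rw [← h3]
      rfl
    rw [h5]
    refine ⟨fun h => ?_, fun h m => h.mono fun a ha => ha _⟩
    let g : (β → M) × (Fin k → M) → M := fun p =>
      Classical.epsilon fun m : M => ¬ φ.Realize p.1 (Fin.snoc p.2 m)
    have hg : FS fun a => g (fun i => (x i).1 a, fun i => (v i).1 a) :=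
      FS.comp (FS.pair (FS.pi fun i => (x i).2) (FS.pi fun i => (v i).2)) g
    refine (h ⟨_, hg⟩).mono fun a ha => ?_
    by_contra! hc
    exact Classical.epsilon_spec hc ha

theorem los_formula [Nonempty M] {β : Type*} [Finite β] (φ : L.Formula β) (x : β → A M) :
    (φ.Realize (fun i => cl (x i))) ↔
      ∀ᶠ a in (W : Filter (ℤ → ℕ)), φ.Realize (fun i => (x i).1 a) := by
  have := los φ x (fun i : Fin 0 => i.elim0)
  unfold Formula.Realize
  have e1 : (fun i : Fin 0 => cl (i.elim0 : A M)) = default := Subsingleton.elim _ _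
  have e2 : ∀ a, (fun i : Fin 0 => (i.elim0 : A M).1 a) = default := fun _ => Subsingleton.elim _ _
  simpa only [e1, e2] using this

theorem los_sentence [Nonempty M] (φ : L.Sentence) : Q M ⊨ φ ↔ M ⊨ φ := by
  have := los_formula φ (fun i : Empty => (i.elim : A M))
  unfold Sentence.Realize
  have e1 : (fun i : Empty => cl (i.elim : A M)) = default := Subsingleton.elim _ _
  have e2 : ∀ a, (fun i : Empty => (i.elim : A M).1 a) = default := fun _ => Subsingleton.elim _ _
  simpa only [e1, e2, eventually_const] using this

/-- shift on functions -/
def shE (M : Type w) : A M ≃ A M where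
  toFun F := ⟨fun x => F.1 (sh x), F.2.sh⟩
  invFun F := ⟨fun x => F.1 (shi x), F.2.shi⟩
  left_inv F := Subtype.ext (funext fun x => by
    have : sh (shi x) = x := by funext i; simp [sh, shi]
    exact congrArg F.1 this)
  right_inv F := Subtype.ext (funext fun x => by
    have : shi (sh x) = x := by funext i; simp [sh, shi]
    exact congrArg F.1 this)

theorem shE_rel (F G : A M) : (st M) F G ↔ (st M) (shE M F) (shE M G) :=
  (W_sh (fun x => F.1 x = G.1 x) ((F.2.pair G.2).comp fun p => p.1 = p.2)).symm

/-- the automorphism -/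
def auto : Q M ≃[L] Q M where
  toEquiv := Quotient.congr (shE M) shE_rel
  map_fun' := fun {n} f x => by
    obtain ⟨y, rfl⟩ : ∃ y : Fin n → A M, x = fun i => cl (y i) :=
      ⟨fun i => (x i).out, funext fun i => (Quotient.out_eq _).symm⟩
    have e1 := funMap_quotient_mk' (L := L) (st M) f y
    have e2 := funMap_quotient_mk' (L := L) (st M) f (fun i => shE M (y i))
    exact (congrArg (Quotient.congr (shE M) shE_rel) e1).trans e2.symm
  map_rel' := fun {n} r x => by
    obtain ⟨y, rfl⟩ : ∃ y : Fin n → A M, x = fun i => cl (y i) :=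
      ⟨fun i => (x i).out, funext fun i => (Quotient.out_eq _).symm⟩
    have e1 := relMap_quotient_mk' (L := L) (st M) r y
    have e2 := relMap_quotient_mk' (L := L) (st M) r (fun i => shE M (y i))
    refine Iff.trans e2 (Iff.trans ?_ e1.symm)
    exact W_sh (fun x => RelMap r fun i => (y i).1 x) ((FS.pi fun i => (y i).2).comp _)

end struct

end IterUlt

/-- Let `T` be an `L`-theory, `k ≥ 1`, and `φ(x,y)` an `L`-formula in two
`k`-tuples of free variables.  Suppose some model of `T` contains an `L`-indiscernible
sequence `(b_i)_{i<ω}` of `k`-tuples such that the relation defined by `φ` is transitive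
and irreflexive and `b_i < b_j` for all `i < j`.  Then there are a model `M₀` of `T`,
`k`-tuples `(a_i)_{i<ω}` in `M₀` with `a_i < a_j` (in the sense of `φ`) for all `i < j`,
and an `L`-automorphism `σ₀` of `M₀` with `σ₀(a_i) = a_{i+1}` componentwise. -/
theorem stmt_2 (L : FirstOrder.Language.{u, v}) (T : L.Theory)
    (k : ℕ) (hk : 1 ≤ k) (φ : L.Formula (Fin k ⊕ Fin k))
    (M : Type w) (_ : L.Structure M) (hM : M ⊨ T)
    (b : ℕ → Fin k → M)
    (hind : IsIndiscernibleSeq L M k b)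
    (htrans : Transitive (fun x y : Fin k → M => φ.Realize (Sum.elim x y)))
    (hirrefl : Irreflexive (fun x y : Fin k → M => φ.Realize (Sum.elim x y)))
    (hchain : ∀ i j : ℕ, i < j → φ.Realize (Sum.elim (b i) (b j))) :
    ∃ (M₀ : Type (max u v w)) (_ : L.Structure M₀),
      M₀ ⊨ T ∧
      ∃ (a : ℕ → Fin k → M₀) (σ₀ : M₀ ≃[L] M₀),
        (∀ i j : ℕ, i < j → φ.Realize (Sum.elim (a i) (a j))) ∧
        ∀ (i : ℕ) (m : Fin k), σ₀ (a i m) = a (i + 1) m := by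
  haveI : Nonempty M := ⟨b 0 ⟨0, hk⟩⟩
  let e : IterUlt.Q M ≃ ULift.{max u v} (IterUlt.Q M) := Equiv.ulift.symm
  letI : L.Structure (ULift.{max u v} (IterUlt.Q M)) := e.inducedStructure
  let g : IterUlt.Q M ≃[L] ULift.{max u v} (IterUlt.Q M) := e.inducedStructureEquiv
  let F : ℕ → Fin k → IterUlt.A M := fun i m =>
    ⟨fun x => b (x (i : ℤ)) m, (IterUlt.FS.coord i).comp fun p => b p m⟩
  refine ⟨ULift.{max u v} (IterUlt.Q M), inferInstance, ?_, fun i m => g (IterUlt.cl (F i m)),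
    g.comp (IterUlt.auto.comp g.symm), ?_, ?_⟩
  · haveI : IterUlt.Q M ⊨ T :=
      ⟨fun ψ hψ => (IterUlt.los_sentence ψ).2 (hM.realize_of_mem ψ hψ)⟩
    exact StrongHomClass.theory_model g
  · intro i j hij
    have h := (IterUlt.los_formula φ (Sum.elim (F i) (F j))).2 (by
      filter_upwards [IterUlt.W_lt i j (by exact_mod_cast hij)] with x hx
      convert hchain _ _ hx using 1
      funext s
      cases s <;> rfl)
    have h' := (StrongHomClass.realize_formula g φ).2 h
    convert h' using 1
    funext s
    cases s <;> rfl
  · intro i m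
    simp only [Language.Equiv.comp_apply, Language.Equiv.symm_apply_apply]
    congr 1
end
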